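/- Let τ be in the upper half-plane, with theta constants θ₂ = θ₂(0,τ), θ₃ = θ₃(0,τ), θ₄ = θ₄(0,τ) (all nonzero), modulus k = θ₂²/θ₃², and Jacobi elliptic functions sn, cn, dn of modulus k defined by sn(x) = (θ₃/θ₂)·θ₁(x/θ₃²,τ)/θ₄(x/θ₃²,τ), cn(x) = (θ₄/θ₂)·θ₂(x/θ₃²,τ)/θ₄(x/θ₃²,τ), dn(x) = (θ₄/θ₃)·θ₃(x/θ₃²,τ)/θ₄(x/θ₃²,τ). Then for all x, y ∈ ℂ at which sn, cn, dn are defined at x, y, x+y and x−y (i.e. θ₄ does not vanish at the corresponding arguments) and for which 1 − k·sn(x)·sn(y) ≠ 0 and dn(x−y) − k·cn(x−y) ≠ 0, one has (1 + k·sn(x)·sn(y)) / (1 − k·sn(x)·sn(y)) = (dn(x+y) − k·cn(x+y)) / (dn(x−y) − k·cn(x−y)). -/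

import Mathlib

open Complex

/-- Jacobi theta function θ₁(z,τ), with nome `q = exp(iπτ)`. -/
noncomputable def theta1 (z τ : ℂ) : ℂ :=
  -I * ∑' n : ℤ, (-1 : ℂ) ^ n * Complex.exp ((Real.pi : ℂ) * I * τ * ((n : ℂ) + 1 / 2) ^ 2) *
    Complex.exp (I * (2 * (n : ℂ) + 1) * z)

/-- Jacobi theta function θ₂(z,τ), with nome `q = exp(iπτ)`. -/
noncomputable def theta2 (z τ : ℂ) : ℂ :=
  ∑' n : ℤ, Complex.exp ((Real.pi : ℂ) * I * τ * ((n : ℂ) + 1 / 2) ^ 2) *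
    Complex.exp (I * (2 * (n : ℂ) + 1) * z)

/-- Jacobi theta function θ₃(z,τ), with nome `q = exp(iπτ)`. -/
noncomputable def theta3 (z τ : ℂ) : ℂ :=
  ∑' n : ℤ, Complex.exp ((Real.pi : ℂ) * I * τ * (n : ℂ) ^ 2) *
    Complex.exp (2 * I * (n : ℂ) * z)

/-- Jacobi theta function θ₄(z,τ), with nome `q = exp(iπτ)`. -/
noncomputable def theta4 (z τ : ℂ) : ℂ :=
  ∑' n : ℤ, (-1 : ℂ) ^ n * Complex.exp ((Real.pi : ℂ) * I * τ * (n : ℂ) ^ 2) *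
    Complex.exp (2 * I * (n : ℂ) * z)

/-- The elliptic modulus `k = θ₂(0,τ)²/θ₃(0,τ)²`. -/
noncomputable def ellMod (τ : ℂ) : ℂ := theta2 0 τ ^ 2 / theta3 0 τ ^ 2

/-- Jacobi elliptic function `sn` of parameter `τ`. -/
noncomputable def ellSn (τ x : ℂ) : ℂ :=
  (theta3 0 τ / theta2 0 τ) * (theta1 (x / theta3 0 τ ^ 2) τ / theta4 (x / theta3 0 τ ^ 2) τ)

/-- Jacobi elliptic function `cn` of parameter `τ`. -/
noncomputable def ellCn (τ x : ℂ) : ℂ :=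
  (theta4 0 τ / theta2 0 τ) * (theta2 (x / theta3 0 τ ^ 2) τ / theta4 (x / theta3 0 τ ^ 2) τ)

/-- Jacobi elliptic function `dn` of parameter `τ`. -/
noncomputable def ellDn (τ x : ℂ) : ℂ :=
  (theta4 0 τ / theta3 0 τ) * (theta3 (x / theta3 0 τ ^ 2) τ / theta4 (x / theta3 0 τ ^ 2) τ)

open scoped Real

/-!
Multiplying two theta series of nome `q` and splitting the double sum by the parity of `m + n` gives
`θ₃(z,τ)θ₃(w,τ) = θ₃(z+w,2τ)θ₃(z-w,2τ) + θ₂(z+w,2τ)θ₂(z-w,2τ)`, since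
`(a + b)² + (a - b)² = 2(a² + b²)`. Shifting `z` and `w` by `π/2` yields the companion formulas
for `θ₃θ₄`, `θ₄θ₃` and `θ₄θ₄`. At parameter `τ/2` they factor `θ₄θ₄ ± θ₁θ₁`, so that
`(1 + k sn x sn y) / (1 - k sn x sn y)` becomes a quotient of two values of `θ₄/θ₃`, and they show
that `dn u - k cn u` is, up to a constant, `θ₄/θ₃` at half of the normalised argument `u/θ₃(0,τ)²`.
The constants `θ₃` and `θ₄` do not vanish because `θ₃(0,τ)θ₄(0,τ) = θ₄(0,2τ)²` would propagate a
zero of `θ₄(0,·)` towards `i∞`, where it tends to `1`; Jacobi's imaginary transformation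
then settles `θ₂`.
-/

lemma exp_int_mul_pi_mul_I (n : ℤ) : cexp (n * (π * I)) = (-1) ^ n := by
  rw [exp_int_mul, exp_pi_mul_I]

lemma theta3_term_eq_jacobiTheta₂_term (n : ℤ) (z τ : ℂ) :
    cexp (π * I * τ * n ^ 2) * cexp (2 * I * n * z) = jacobiTheta₂_term n (z / π) τ := by
  rw [jacobiTheta₂_term, ← Complex.exp_add]
  congr 1
  field_simp
  ring

lemma theta3_eq_jacobiTheta₂ (z τ : ℂ) : theta3 z τ = jacobiTheta₂ (z / π) τ :=
  tsum_congr fun n => theta3_term_eq_jacobiTheta₂_term n z τ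

lemma hasSum_theta3 (z : ℂ) {τ : ℂ} (hτ : 0 < τ.im) :
    HasSum (fun n : ℤ => cexp (π * I * τ * n ^ 2) * cexp (2 * I * n * z)) (theta3 z τ) := by
  simpa only [theta3_eq_jacobiTheta₂, theta3_term_eq_jacobiTheta₂_term] using
    hasSum_jacobiTheta₂_term (z / π) hτ

lemma theta2_term_eq_mul_theta3_term (n : ℤ) (z τ : ℂ) :
    cexp (π * I * τ * (n + 1 / 2) ^ 2) * cexp (I * (2 * n + 1) * z) =
      cexp (π * I * τ / 4 + I * z) *
        (cexp (π * I * τ * n ^ 2) * cexp (2 * I * n * (z + π * τ / 2))) := by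
  simp only [← Complex.exp_add]
  ring_nf

lemma theta2_eq_exp_mul_theta3 (z τ : ℂ) :
    theta2 z τ = cexp (π * I * τ / 4 + I * z) * theta3 (z + π * τ / 2) τ := by
  simp only [theta2, theta3, theta2_term_eq_mul_theta3_term, tsum_mul_left]

lemma hasSum_theta2 (z : ℂ) {τ : ℂ} (hτ : 0 < τ.im) :
    HasSum (fun n : ℤ => cexp (π * I * τ * (n + 1 / 2) ^ 2) * cexp (I * (2 * n + 1) * z))
      (theta2 z τ) := by
  simpa only [theta2_eq_exp_mul_theta3, theta2_term_eq_mul_theta3_term] using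
    (hasSum_theta3 (z + π * τ / 2) hτ).mul_left _

lemma theta3_add_pi_div_two (z τ : ℂ) : theta3 (z + π / 2) τ = theta4 z τ := by
  refine tsum_congr fun n => ?_
  rw [show 2 * I * n * (z + π / 2) = n * (π * I) + 2 * I * n * z by ring, Complex.exp_add,
    exp_int_mul_pi_mul_I]
  ring

lemma theta3_add_pi (z τ : ℂ) : theta3 (z + π) τ = theta3 z τ := by
  rw [theta3_eq_jacobiTheta₂, theta3_eq_jacobiTheta₂, add_div, div_self (by simp),
    jacobiTheta₂_add_left]

lemma theta3_sub_pi_div_two (z τ : ℂ) : theta3 (z - π / 2) τ = theta4 z τ := by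
  rw [← theta3_add_pi, ← theta3_add_pi_div_two]
  ring_nf

lemma theta2_add_pi_div_two (z τ : ℂ) : theta2 (z + π / 2) τ = -theta1 z τ := by
  rw [theta1, neg_mul, neg_neg, ← tsum_mul_left]
  refine tsum_congr fun n => ?_
  rw [show I * (2 * n + 1) * (z + π / 2) = n * (π * I) + π / 2 * I + I * (2 * n + 1) * z by ring,
    Complex.exp_add, Complex.exp_add, exp_int_mul_pi_mul_I, exp_pi_div_two_mul_I]
  ring

lemma theta2_add_pi (z τ : ℂ) : theta2 (z + π) τ = -theta2 z τ := by
  rw [theta2_eq_exp_mul_theta3, theta2_eq_exp_mul_theta3, add_right_comm, theta3_add_pi, mul_add,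
    ← add_assoc, mul_comm I (π : ℂ), Complex.exp_add_pi_mul_I, neg_mul]

lemma theta2_sub_pi_div_two (z τ : ℂ) : theta2 (z - π / 2) τ = theta1 z τ := by
  rw [← neg_inj, ← theta2_add_pi, ← theta2_add_pi_div_two]
  ring_nf

lemma hasSum_int_prod_of_even_add_of_odd_add {α : Type*} [AddCommMonoid α] [TopologicalSpace α]
    [ContinuousAdd α] {f : ℤ × ℤ → α} {s t : α}
    (heven : HasSum (fun p : ℤ × ℤ => f (p.1 + p.2, p.1 - p.2)) s)
    (hodd : HasSum (fun p : ℤ × ℤ => f (p.1 + p.2 + 1, p.1 - p.2)) t) :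
    HasSum f (s + t) := by
  let even : ℤ × ℤ → ℤ × ℤ := fun p => (p.1 + p.2, p.1 - p.2)
  let odd : ℤ × ℤ → ℤ × ℤ := fun p => (p.1 + p.2 + 1, p.1 - p.2)
  have even_injective : Function.Injective even := by
    rintro ⟨a, b⟩ ⟨c, d⟩ h
    simp only [even, Prod.mk.injEq] at h ⊢
    omega
  have odd_injective : Function.Injective odd := by
    rintro ⟨a, b⟩ ⟨c, d⟩ h
    simp only [odd, Prod.mk.injEq] at h ⊢
    omega
  have range_disjoint : Disjoint (Set.range even) (Set.range odd) := by
    rw [Set.disjoint_left]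
    rintro _ ⟨⟨a, b⟩, rfl⟩ ⟨⟨c, d⟩, h⟩
    simp only [even, odd, Prod.mk.injEq] at h
    omega
  have range_codisjoint : Codisjoint (Set.range even) (Set.range odd) := by
    rw [codisjoint_iff_le_sup]
    rintro ⟨m, n⟩ -
    rcases Int.even_or_odd' (m + n) with ⟨a, ha | ha⟩
    · exact Or.inl ⟨(a, m - a), by simp only [even, Prod.mk.injEq]; omega⟩
    · exact Or.inr ⟨(a, m - a - 1), by simp only [odd, Prod.mk.injEq]; omega⟩
  exact (even_injective.hasSum_range_iff.2 heven).add_isCompl ⟨range_disjoint, range_codisjoint⟩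
    (odd_injective.hasSum_range_iff.2 hodd)

section Duplication

variable (z w : ℂ) {τ : ℂ}

lemma theta3_mul_theta3 (hτ : 0 < τ.im) :
    theta3 z τ * theta3 w τ =
      theta3 (z + w) (2 * τ) * theta3 (z - w) (2 * τ) +
        theta2 (z + w) (2 * τ) * theta2 (z - w) (2 * τ) := by
  have h2τ : 0 < (2 * τ).im := by simpa using hτ
  have hasSum_mul {f g : ℤ → ℂ} {s t : ℂ} (hf : HasSum f s) (hg : HasSum g t) :
      HasSum (fun p : ℤ × ℤ => f p.1 * g p.2) (s * t) :=
    hf.mul hg (summable_mul_of_summable_norm hf.summable.norm hg.summable.norm)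
  refine (hasSum_mul (hasSum_theta3 z hτ) (hasSum_theta3 w hτ)).unique
    (hasSum_int_prod_of_even_add_of_odd_add ?_ ?_)
  · refine (hasSum_mul (hasSum_theta3 (z + w) h2τ) (hasSum_theta3 (z - w) h2τ)).congr_fun
      fun p => ?_
    simp only [← Complex.exp_add]
    push_cast
    ring_nf
  · refine (hasSum_mul (hasSum_theta2 (z + w) h2τ) (hasSum_theta2 (z - w) h2τ)).congr_fun
      fun p => ?_
    simp only [← Complex.exp_add]
    push_cast
    ring_nf

lemma theta4_mul_theta3 (hτ : 0 < τ.im) :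
    theta4 z τ * theta3 w τ =
      theta4 (z + w) (2 * τ) * theta4 (z - w) (2 * τ) +
        theta1 (z + w) (2 * τ) * theta1 (z - w) (2 * τ) := by
  rw [← theta3_add_pi_div_two, theta3_mul_theta3 _ _ hτ, add_right_comm, add_sub_right_comm]
  simp only [theta3_add_pi_div_two, theta2_add_pi_div_two, neg_mul_neg]

lemma theta3_mul_theta4 (hτ : 0 < τ.im) :
    theta3 z τ * theta4 w τ =
      theta4 (z + w) (2 * τ) * theta4 (z - w) (2 * τ) -
        theta1 (z + w) (2 * τ) * theta1 (z - w) (2 * τ) := by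
  rw [← theta3_add_pi_div_two w, theta3_mul_theta3 _ _ hτ, ← add_assoc, ← sub_sub]
  simp only [theta3_add_pi_div_two, theta2_add_pi_div_two, theta3_sub_pi_div_two,
    theta2_sub_pi_div_two, neg_mul, ← sub_eq_add_neg]

lemma theta4_mul_theta4 (hτ : 0 < τ.im) :
    theta4 z τ * theta4 w τ =
      theta3 (z + w) (2 * τ) * theta3 (z - w) (2 * τ) -
        theta2 (z + w) (2 * τ) * theta2 (z - w) (2 * τ) := by
  rw [← theta3_add_pi_div_two z, ← theta3_add_pi_div_two w, theta3_mul_theta3 _ _ hτ,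
    add_add_add_comm, add_halves, add_sub_add_right_eq_sub, theta3_add_pi, theta2_add_pi, neg_mul,
    ← sub_eq_add_neg]

lemma theta4_sq (hτ : 0 < τ.im) :
    theta4 z τ ^ 2 =
      theta3 0 (2 * τ) * theta3 (2 * z) (2 * τ) - theta2 0 (2 * τ) * theta2 (2 * z) (2 * τ) := by
  rw [sq, theta4_mul_theta4 z z hτ, sub_self, ← two_mul, mul_comm, mul_comm (theta2 0 _)]

/-- Landen's transformation for `theta4`. -/
lemma theta3_mul_theta4_self (hτ : 0 < τ.im) :
    theta3 z τ * theta4 z τ = theta4 0 (2 * τ) * theta4 (2 * z) (2 * τ) := by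
  have hsub := theta3_mul_theta4 z z hτ
  have hadd := theta4_mul_theta3 z z hτ
  rw [sub_self, ← two_mul] at hsub hadd
  linear_combination (hsub + hadd) / 2

end Duplication

lemma jacobiTheta_ne_zero_of_one_le_im {τ : ℂ} (hτ : 1 ≤ τ.im) : jacobiTheta τ ≠ 0 := by
  intro h
  have hbound := norm_jacobiTheta_sub_one_le (zero_lt_one.trans_le hτ)
  rw [h, zero_sub, norm_neg, norm_one] at hbound
  have hexp : Real.exp (-π * τ.im) < 1 / 3 := by
    rw [neg_mul, Real.exp_neg, inv_lt_comm₀ (Real.exp_pos _) (by norm_num)]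
    nlinarith [Real.add_one_le_exp (π * τ.im), Real.pi_gt_three]
  rw [div_mul_eq_mul_div, le_div_iff₀ (by linarith)] at hbound
  linarith

lemma exp_pi_mul_I_mul_int_sq (n : ℤ) : cexp (π * I * n ^ 2) = (-1) ^ n := by
  have h := exp_int_mul_pi_mul_I (n ^ 2)
  rw [Int.cast_pow, mul_comm] at h
  rw [h]
  rcases Int.even_or_odd n with hn | hn
  · rw [hn.neg_one_zpow, (hn.pow_of_ne_zero two_ne_zero).neg_one_zpow]
  · rw [hn.neg_one_zpow, hn.pow.neg_one_zpow]

lemma theta3_add_one_right (z τ : ℂ) : theta3 z (τ + 1) = theta4 z τ := by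
  refine tsum_congr fun n => ?_
  rw [mul_add, mul_one, add_mul, Complex.exp_add, exp_pi_mul_I_mul_int_sq]
  ring

lemma theta3_add_two_right (z τ : ℂ) : theta3 z (τ + 2) = theta3 z τ := by
  rw [theta3_eq_jacobiTheta₂, theta3_eq_jacobiTheta₂, jacobiTheta₂_add_right]

lemma theta4_add_one_right (z τ : ℂ) : theta4 z (τ + 1) = theta3 z τ := by
  rw [← theta3_add_one_right, add_assoc, one_add_one_eq_two, theta3_add_two_right]

lemma theta4_zero_eq_jacobiTheta (τ : ℂ) : theta4 0 τ = jacobiTheta (τ + 1) := by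
  rw [← theta3_add_one_right, theta3_eq_jacobiTheta₂, zero_div, jacobiTheta_eq_jacobiTheta₂]

lemma theta4_zero_ne_zero {τ : ℂ} (hτ : 0 < τ.im) : theta4 0 τ ≠ 0 := by
  intro h
  have im_two_pow_mul (n : ℕ) : ((2 : ℂ) ^ n * τ).im = 2 ^ n * τ.im := by
    exact_mod_cast im_ofReal_mul ((2 : ℝ) ^ n) τ
  have descent (n : ℕ) : theta4 0 (2 ^ n * τ) = 0 := by
    induction n with
    | zero => simpa using h
    | succ n ih =>
      have him : 0 < ((2 : ℂ) ^ n * τ).im := by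
        rw [im_two_pow_mul]
        positivity
      have landen := theta3_mul_theta4_self 0 him
      rw [ih, mul_zero, mul_zero, ← mul_assoc, ← pow_succ'] at landen
      exact mul_self_eq_zero.1 landen.symm
  obtain ⟨n, hn⟩ := pow_unbounded_of_one_lt (1 / τ.im) (one_lt_two : (1 : ℝ) < 2)
  have one_le_im : 1 ≤ ((2 : ℂ) ^ n * τ + 1).im := by
    rw [add_im, one_im, add_zero, im_two_pow_mul]
    exact ((div_lt_iff₀ hτ).1 hn).le
  exact jacobiTheta_ne_zero_of_one_le_im one_le_im (theta4_zero_eq_jacobiTheta _ ▸ descent n)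

lemma theta3_zero_ne_zero {τ : ℂ} (hτ : 0 < τ.im) : theta3 0 τ ≠ 0 := by
  rw [← theta4_add_one_right]
  exact theta4_zero_ne_zero (by simpa using hτ)

lemma theta2_functional_equation (z : ℂ) {τ : ℂ} (hτ : τ ≠ 0) :
    theta2 z τ =
      1 / (-I * τ) ^ (1 / 2 : ℂ) * cexp (-I * z ^ 2 / (π * τ)) * theta4 (z / τ) (-1 / τ) := by
  rw [theta2_eq_exp_mul_theta3, ← theta3_add_pi_div_two, theta3_eq_jacobiTheta₂,
    theta3_eq_jacobiTheta₂, jacobiTheta₂_functional_equation]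
  have hexp : cexp (π * I * τ / 4 + I * z) * cexp (-π * I * ((z + π * τ / 2) / π) ^ 2 / τ) =
      cexp (-I * z ^ 2 / (π * τ)) := by
    rw [← Complex.exp_add]
    congr 1
    field_simp
    ring
  have harg : (z + π * τ / 2) / π / τ = (z / τ + π / 2) / π := by field_simp
  rw [← hexp, harg]
  ring

lemma theta2_zero_ne_zero {τ : ℂ} (hτ : 0 < τ.im) : theta2 0 τ ≠ 0 := by
  have hτ₀ : τ ≠ 0 := by
    rintro rfl
    simp at hτ
  have him : 0 < (-1 / τ).im := by
    rw [neg_div, one_div, neg_im, inv_im, neg_div, neg_neg]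
    exact div_pos hτ (normSq_pos.2 hτ₀)
  rw [theta2_functional_equation 0 hτ₀, zero_div]
  refine mul_ne_zero (mul_ne_zero (one_div_ne_zero ?_) (Complex.exp_ne_zero _))
    (theta4_zero_ne_zero him)
  simp [cpow_eq_zero_iff, hτ₀]

/-- The quotient `θ₄ / θ₃` of parameter `τ / 2` at half of the normalised argument `u / θ₃(0,τ)²`
of `ellSn`, `ellCn` and `ellDn`; up to a constant it is `1 / dn` of a rescaled argument, for
the parameter `τ / 2`. -/
noncomputable def halfThetaRatio (τ u : ℂ) : ℂ :=
  theta4 (u / theta3 0 τ ^ 2 / 2) (τ / 2) / theta3 (u / theta3 0 τ ^ 2 / 2) (τ / 2)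

section Elliptic

variable {τ : ℂ}

lemma ellMod_mul_ellSn_mul_ellSn (hτ : 0 < τ.im) (x y : ℂ) :
    ellMod τ * ellSn τ x * ellSn τ y =
      theta1 (x / theta3 0 τ ^ 2) τ * theta1 (y / theta3 0 τ ^ 2) τ /
        (theta4 (x / theta3 0 τ ^ 2) τ * theta4 (y / theta3 0 τ ^ 2) τ) := by
  have hθ₂ := theta2_zero_ne_zero hτ
  have hθ₃ := theta3_zero_ne_zero hτ
  rw [ellSn, ellSn, mul_div_mul_comm, ellMod]
  field_simp

lemma one_add_div_one_sub_ellMod_mul_ellSn_mul_ellSn (hτ : 0 < τ.im) {x y : ℂ}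
    (hx : theta4 (x / theta3 0 τ ^ 2) τ ≠ 0) (hy : theta4 (y / theta3 0 τ ^ 2) τ ≠ 0) :
    (1 + ellMod τ * ellSn τ x * ellSn τ y) / (1 - ellMod τ * ellSn τ x * ellSn τ y) =
      halfThetaRatio τ (x + y) / halfThetaRatio τ (x - y) := by
  have hτ' : 0 < (τ / 2).im := by simpa using hτ
  rw [ellMod_mul_ellSn_mul_ellSn hτ, halfThetaRatio, halfThetaRatio, add_div x, sub_div x]
  generalize x / theta3 0 τ ^ 2 = a at *
  generalize y / theta3 0 τ ^ 2 = b at *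
  have hadd := theta4_mul_theta3 ((a + b) / 2) ((a - b) / 2) hτ'
  have hsub := theta3_mul_theta4 ((a + b) / 2) ((a - b) / 2) hτ'
  rw [show (a + b) / 2 + (a - b) / 2 = a by ring, show (a + b) / 2 - (a - b) / 2 = b by ring,
    mul_div_cancel₀ τ two_ne_zero] at hadd hsub
  have hab := mul_ne_zero hx hy
  rw [one_add_div hab, one_sub_div hab, ← hadd, ← hsub, div_div_div_cancel_right₀ hab,
    div_div_div_eq]

lemma ellDn_sub_ellMod_mul_ellCn (hτ : 0 < τ.im) (u : ℂ) :
    ellDn τ u - ellMod τ * ellCn τ u =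
      (theta4 0 τ / theta3 0 τ) ^ 2 * halfThetaRatio τ u := by
  have hτ' : 0 < (τ / 2).im := by simpa using hτ
  have hθ₃ := theta3_zero_ne_zero hτ
  have hθ₄ := theta4_zero_ne_zero hτ
  rw [ellDn, ellMod, ellCn, halfThetaRatio]
  set v := u / theta3 0 τ ^ 2
  have hsq := theta4_sq (v / 2) hτ'
  have landen := theta3_mul_theta4_self (v / 2) hτ'
  rw [mul_div_cancel₀ v two_ne_zero, mul_div_cancel₀ τ two_ne_zero] at hsq landen
  calc theta4 0 τ / theta3 0 τ * (theta3 v τ / theta4 v τ) -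
        theta2 0 τ ^ 2 / theta3 0 τ ^ 2 * (theta4 0 τ / theta2 0 τ * (theta2 v τ / theta4 v τ))
      = (theta4 0 τ / theta3 0 τ) ^ 2 * ((theta3 0 τ * theta3 v τ - theta2 0 τ * theta2 v τ) /
          (theta4 0 τ * theta4 v τ)) := by
        field_simp
    _ = (theta4 0 τ / theta3 0 τ) ^ 2 * (theta4 (v / 2) (τ / 2) / theta3 (v / 2) (τ / 2)) := by
        rw [← hsq, ← landen, sq (theta4 (v / 2) _), div_mul_eq_div_div_swap, mul_self_div_self]

end Elliptic

theorem sn_cn_dn_identity (τ : ℂ) (hτ : 0 < τ.im) (x y : ℂ)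
    (h1 : theta4 (x / theta3 0 τ ^ 2) τ ≠ 0)
    (h2 : theta4 (y / theta3 0 τ ^ 2) τ ≠ 0)
    (h3 : theta4 ((x + y) / theta3 0 τ ^ 2) τ ≠ 0)
    (h4 : theta4 ((x - y) / theta3 0 τ ^ 2) τ ≠ 0)
    (h5 : 1 - ellMod τ * ellSn τ x * ellSn τ y ≠ 0)
    (h6 : ellDn τ (x - y) - ellMod τ * ellCn τ (x - y) ≠ 0) :
    (1 + ellMod τ * ellSn τ x * ellSn τ y) / (1 - ellMod τ * ellSn τ x * ellSn τ y) =
      (ellDn τ (x + y) - ellMod τ * ellCn τ (x + y)) /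
        (ellDn τ (x - y) - ellMod τ * ellCn τ (x - y)) := by
  have hθ₃ := theta3_zero_ne_zero hτ
  have hθ₄ := theta4_zero_ne_zero hτ
  rw [one_add_div_one_sub_ellMod_mul_ellSn_mul_ellSn hτ h1 h2, ellDn_sub_ellMod_mul_ellCn hτ,
    ellDn_sub_ellMod_mul_ellCn hτ, mul_div_mul_left _ _ (pow_ne_zero 2 (div_ne_zero hθ₄ hθ₃))]
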